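/- arXiv:1707.09846 — 3 statements merged into one kernel-verified Lean document; each statement's English description precedes it below -/
import Mathlib

section
/- Suppose that for every finite field F and every F-linear operator T : F[y] → F[y] satisfying (1) deg T(f) < deg f for every nonzero f ∈ F[y], (2) there exist d ≥ 1 and a_1, …, a_d ∈ F[y] with deg a_i ≤ i such that T(y^n) = a_1·T(y^{n−1}) + ⋯ + a_d·T(y^{n−d}) for all n ≥ d, and (3) the coefficient of y^d in a_d is nonzero, there exist a real α < 1 and C > 0 with N_T(y^n) ≤ C·n^α for all n ≥ 1. Then the same conclusion holds for every finite commutative ring R and every R-linear operator T : R[y] → R[y] satisfying (1), (2), and (3) with 'nonzero' strengthened to 'a unit of R'. -/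
open Polynomial

/-- The nilpotence index of `f` with respect to `T`: the largest `k` with `T^k f ≠ 0`. -/
noncomputable def nilpIndex {R : Type} [CommRing R]
    (T : Module.End R (Polynomial R)) (f : Polynomial R) : ℕ :=
  sSup {k : ℕ | (T ^ k) f ≠ 0}

/-- A degree-lowering operator kills a polynomial of degree less than `k` after `k` steps. -/
lemma pow_apply_eq_zero_of_degree_lt {R : Type*} [CommRing R] {T : Module.End R R[X]}
    (hT : ∀ f : R[X], f ≠ 0 → (T f).degree < f.degree) (k : ℕ) (f : R[X])
    (hf : f.degree < (k : WithBot ℕ)) : (T ^ k) f = 0 := by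
  induction k generalizing f with
  | zero => simpa [Polynomial.degree_eq_bot, Nat.WithBot.lt_zero_iff] using hf
  | succ k ih =>
    rw [pow_succ, Module.End.mul_apply]
    by_cases h0 : f = 0
    · simp [h0]
    · refine ih _ ((hT f h0).trans_le ?_)
      rw [degree_eq_natDegree h0] at hf ⊢
      exact_mod_cast Nat.lt_succ_iff.mp (by exact_mod_cast hf)

lemma natDegree_pow_apply_le {R : Type*} [CommRing R] {T : Module.End R R[X]}
    (hT : ∀ f : R[X], f ≠ 0 → (T f).degree < f.degree) (k : ℕ) (f : R[X]) :
    ((T ^ k) f).natDegree ≤ f.natDegree := by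
  induction k with
  | zero => simp
  | succ k ih =>
    rw [pow_succ', Module.End.mul_apply]
    by_cases h0 : (T ^ k) f = 0
    · simp [h0]
    · exact (Polynomial.natDegree_le_natDegree (hT _ h0).le).trans ih

lemma le_nilpIndex {R : Type} [CommRing R] {T : Module.End R R[X]}
    (hT : ∀ f : R[X], f ≠ 0 → (T f).degree < f.degree) {f : R[X]} {k : ℕ}
    (hk : (T ^ k) f ≠ 0) : k ≤ nilpIndex T f := by
  refine le_csSup ⟨f.natDegree, fun m hm => ?_⟩ hk
  by_contra! hlt
  exact hm (pow_apply_eq_zero_of_degree_lt hT m f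
    (lt_of_le_of_lt degree_le_natDegree (by exact_mod_cast hlt)))

/-- Every `T ^ k (X ^ j)` with `j ≤ n` has coefficients in `I` as soon as `k` exceeds a fixed
sublinear power function of `n`. -/
def SublinearlyInto {R : Type*} [CommRing R] (T : Module.End R R[X]) (I : Ideal R) : Prop :=
  ∃ α : ℝ, 0 ≤ α ∧ α < 1 ∧ ∃ C : ℝ, 0 < C ∧ ∀ n : ℕ, 1 ≤ n → ∀ j ≤ n, ∀ k : ℕ,
    C * (n : ℝ) ^ α ≤ k → ∀ i, ((T ^ k) (X ^ j)).coeff i ∈ I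

lemma SublinearlyInto.top {R : Type*} [CommRing R] (T : Module.End R R[X]) :
    SublinearlyInto T ⊤ :=
  ⟨0, le_rfl, zero_lt_one, 1, zero_lt_one, by simp⟩

lemma SublinearlyInto.mono {R : Type*} [CommRing R] {T : Module.End R R[X]} {I J : Ideal R}
    (hI : SublinearlyInto T I) (h : I ≤ J) : SublinearlyInto T J := by
  obtain ⟨α, h0, h1, C, hC, H⟩ := hI
  exact ⟨α, h0, h1, C, hC, fun n hn j hj k hk i => h (H n hn j hj k hk i)⟩

lemma SublinearlyInto.mul {R : Type*} [CommRing R] {T : Module.End R R[X]}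
    (hT : ∀ f : R[X], f ≠ 0 → (T f).degree < f.degree) {I J : Ideal R}
    (hI : SublinearlyInto T I) (hJ : SublinearlyInto T J) : SublinearlyInto T (I * J) := by
  obtain ⟨α, hα0, hα1, C, hC, HI⟩ := hI
  obtain ⟨β, hβ0, hβ1, D, hD, HJ⟩ := hJ
  refine ⟨max α β, le_max_of_le_left hα0, max_lt hα1 hβ1, C + D + 1, by positivity, ?_⟩
  intro n hn j hj k hk i
  have hn' : (1 : ℝ) ≤ n := by exact_mod_cast hn
  have hα : (n : ℝ) ^ α ≤ (n : ℝ) ^ max α β :=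
    Real.rpow_le_rpow_of_exponent_le hn' (le_max_left _ _)
  have hβ : (n : ℝ) ^ β ≤ (n : ℝ) ^ max α β :=
    Real.rpow_le_rpow_of_exponent_le hn' (le_max_right _ _)
  have hone : (1 : ℝ) ≤ (n : ℝ) ^ max α β :=
    Real.one_le_rpow hn' (le_max_of_le_left hα0)
  set m := ⌈C * (n : ℝ) ^ α⌉₊
  have hm1 : (m : ℝ) < C * (n : ℝ) ^ α + 1 := Nat.ceil_lt_add_one (by positivity)
  have hCα := mul_le_mul_of_nonneg_left hα hC.le
  have hDβ := mul_le_mul_of_nonneg_left hβ hD.le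
  have hDpos : 0 < D * (n : ℝ) ^ β := by positivity
  have hmk : (m : ℝ) + D * (n : ℝ) ^ β ≤ k := by linarith
  have hmk' : m ≤ k := by
    have : (m : ℝ) ≤ k := by linarith
    exact_mod_cast this
  obtain ⟨l, rfl⟩ := Nat.exists_eq_add_of_le' hmk'
  have hl : D * (n : ℝ) ^ β ≤ l := by
    push_cast at hmk
    linarith
  set g := (T ^ m) (X ^ j)
  have hgI : ∀ s, g.coeff s ∈ I := HI n hn j hj m (Nat.le_ceil _)
  have hgdeg : g.natDegree ≤ n :=
    ((natDegree_pow_apply_le hT m _).trans (natDegree_X_pow_le j)).trans hj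
  have hsum : (T ^ l) g = ∑ s ∈ Finset.range (n + 1), g.coeff s • (T ^ l) (X ^ s) := by
    conv_lhs => rw [g.as_sum_range' (n + 1) (by omega)]
    simp only [map_sum, ← smul_X_eq_monomial, map_smul]
  rw [pow_add, Module.End.mul_apply, hsum, finsetSum_coeff]
  refine Ideal.sum_mem _ fun s hs => ?_
  rw [coeff_smul, smul_eq_mul]
  exact Ideal.mul_mem_mul (hgI s)
    (HJ n hn s (Nat.lt_succ_iff.mp (Finset.mem_range.mp hs)) l hl i)

lemma SublinearlyInto.prod {R : Type*} [CommRing R] {T : Module.End R R[X]}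
    (hT : ∀ f : R[X], f ≠ 0 → (T f).degree < f.degree) (Z : Multiset (Ideal R))
    (hZ : ∀ I ∈ Z, SublinearlyInto T I) : SublinearlyInto T Z.prod := by
  induction Z using Multiset.induction_on with
  | empty => simpa using SublinearlyInto.top T
  | cons I Z ih =>
    rw [Multiset.prod_cons]
    exact (hZ I (Multiset.mem_cons_self I Z)).mul hT
      (ih fun J hJ => hZ J (Multiset.mem_cons_of_mem hJ))

lemma SublinearlyInto.exists_nilpIndex_le {R : Type} [CommRing R] {T : Module.End R R[X]}
    (h : SublinearlyInto T ⊥) : ∃ α : ℝ, α < 1 ∧ ∃ C : ℝ, 0 < C ∧ ∀ n : ℕ, 1 ≤ n →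
      (nilpIndex T (X ^ n) : ℝ) ≤ C * (n : ℝ) ^ α := by
  obtain ⟨α, -, hα, C, hC, H⟩ := h
  refine ⟨α, hα, C, hC, fun n hn => ?_⟩
  have hle : nilpIndex T (X ^ n) ≤ ⌊C * (n : ℝ) ^ α⌋₊ := by
    refine csSup_le' fun k hk => Nat.le_floor ?_
    by_contra! hlt
    exact hk (Polynomial.ext fun i => by simpa using H n hn n le_rfl k hlt.le i)
  exact (Nat.le_floor_iff (by positivity)).mp hle

/-- The operator induced by `T` on polynomials over an `R`-algebra `S`. -/
noncomputable def baseChangeEnd {R S : Type*} [CommRing R] [CommRing S] (φ : R →+* S)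
    (T : Module.End R R[X]) : Module.End S S[X] :=
  (Polynomial.basisMonomials S).constr S fun n => (T (X ^ n)).map φ

lemma baseChangeEnd_map {R S : Type*} [CommRing R] [CommRing S] (φ : R →+* S)
    (T : Module.End R R[X]) (f : R[X]) : baseChangeEnd φ T (f.map φ) = (T f).map φ := by
  have hX : ∀ n, baseChangeEnd φ T (X ^ n) = (T (X ^ n)).map φ := fun n => by
    have := (Polynomial.basisMonomials S).constr_basis S (fun n => (T (X ^ n)).map φ) n
    simpa only [baseChangeEnd, coe_basisMonomials, monomial_one_right_eq_X_pow] using this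
  induction f using Polynomial.induction_on' with
  | add p q hp hq => simp [hp, hq]
  | monomial n a =>
    rw [map_monomial, ← smul_X_eq_monomial, ← smul_X_eq_monomial, map_smul, map_smul, hX,
      smul_eq_C_mul, smul_eq_C_mul, Polynomial.map_mul, map_C]

lemma baseChangeEnd_pow_map {R S : Type*} [CommRing R] [CommRing S] (φ : R →+* S)
    (T : Module.End R R[X]) (k : ℕ) (f : R[X]) :
    (baseChangeEnd φ T ^ k) (f.map φ) = ((T ^ k) f).map φ := by
  induction k generalizing f with
  | zero => simp
  | succ k ih =>
    rw [pow_succ, pow_succ, Module.End.mul_apply, Module.End.mul_apply, baseChangeEnd_map, ih]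

lemma degree_baseChangeEnd_lt {R S : Type*} [CommRing R] [CommRing S] {φ : R →+* S}
    (hφ : Function.Surjective φ) {T : Module.End R R[X]}
    (hT : ∀ f : R[X], f ≠ 0 → (T f).degree < f.degree) (f : S[X]) (hf : f ≠ 0) :
    (baseChangeEnd φ T f).degree < f.degree := by
  obtain ⟨g, rfl, hg⟩ := exists_degree_eq_of_mem_lifts ((mem_lifts f).mpr (map_surjective φ hφ f))
  rw [baseChangeEnd_map, ← hg]
  refine degree_map_le.trans_lt (hT g ?_)
  rintro rfl
  simp at hf

/-- A power bound on the nilpotence index over a quotient of `R` controls when the iterates of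
`T` land in the kernel. -/
lemma sublinearlyInto_ker {R S : Type} [CommRing R] [CommRing S] {φ : R →+* S}
    (hφ : Function.Surjective φ) {T : Module.End R R[X]}
    (hT : ∀ f : R[X], f ≠ 0 → (T f).degree < f.degree) {α C : ℝ} (hα : α < 1) (hC : 0 < C)
    (H : ∀ n : ℕ, 1 ≤ n → (nilpIndex (baseChangeEnd φ T) (X ^ n) : ℝ) ≤ C * (n : ℝ) ^ α) :
    SublinearlyInto T (RingHom.ker φ) := by
  refine ⟨max α 0, le_max_right _ _, max_lt hα zero_lt_one, C + 1, by positivity, ?_⟩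
  intro n hn j hj k hk i
  have hn' : (1 : ℝ) ≤ n := by exact_mod_cast hn
  have hone : (1 : ℝ) ≤ (n : ℝ) ^ max α 0 := Real.one_le_rpow hn' (le_max_right _ _)
  suffices h : (baseChangeEnd φ T ^ k) (X ^ j) = 0 by
    have hmap := baseChangeEnd_pow_map φ T k (X ^ j)
    rw [Polynomial.map_pow, map_X, h] at hmap
    rw [RingHom.mem_ker, ← coeff_map, ← hmap, coeff_zero]
  by_contra hne
  rcases Nat.eq_zero_or_pos j with rfl | hj0
  · have hk0 : (0 : ℝ) < k := lt_of_lt_of_le (by positivity) hk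
    refine hne (pow_apply_eq_zero_of_degree_lt (degree_baseChangeEnd_lt hφ hT) k _
      ((degree_X_pow_le 0).trans_lt ?_))
    exact_mod_cast hk0
  · have hj1 : (1 : ℝ) ≤ j := by exact_mod_cast hj0
    have hkj : (k : ℝ) ≤ C * (j : ℝ) ^ α :=
      le_trans (by exact_mod_cast le_nilpIndex (degree_baseChangeEnd_lt hφ hT) hne) (H j hj0)
    have hjn : (j : ℝ) ^ α ≤ (n : ℝ) ^ max α 0 :=
      (Real.rpow_le_rpow_of_exponent_le hj1 (le_max_left _ _)).trans
        (Real.rpow_le_rpow (by positivity) (by exact_mod_cast hj) (le_max_right _ _))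
    have := mul_le_mul_of_nonneg_left hjn hC.le
    linarith

/-- Reduction of the Nilpotence Growth Theorem from finite fields to finite rings. -/
theorem stmt1
    (H : ∀ (F : Type) [Field F] [Fintype F] (T : Module.End F (Polynomial F)),
      (∀ f : Polynomial F, f ≠ 0 → (T f).degree < f.degree) →
      ∀ d : ℕ, 1 ≤ d → ∀ a : ℕ → Polynomial F,
        (∀ i ∈ Finset.Icc 1 d, (a i).degree ≤ (i : WithBot ℕ)) →
        (∀ n, d ≤ n →
          T ((X : Polynomial F) ^ n) = ∑ i ∈ Finset.Icc 1 d, a i * T (X ^ (n - i))) →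
        (a d).coeff d ≠ 0 →
        ∃ α : ℝ, α < 1 ∧ ∃ C : ℝ, 0 < C ∧ ∀ n : ℕ, 1 ≤ n →
          (nilpIndex T (X ^ n) : ℝ) ≤ C * (n : ℝ) ^ α) :
    ∀ (R : Type) [CommRing R] [Fintype R] (T : Module.End R (Polynomial R)),
      (∀ f : Polynomial R, f ≠ 0 → (T f).degree < f.degree) →
      ∀ d : ℕ, 1 ≤ d → ∀ a : ℕ → Polynomial R,
        (∀ i ∈ Finset.Icc 1 d, (a i).degree ≤ (i : WithBot ℕ)) →
        (∀ n, d ≤ n →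
          T ((X : Polynomial R) ^ n) = ∑ i ∈ Finset.Icc 1 d, a i * T (X ^ (n - i))) →
        IsUnit ((a d).coeff d) →
        ∃ α : ℝ, α < 1 ∧ ∃ C : ℝ, 0 < C ∧ ∀ n : ℕ, 1 ≤ n →
          (nilpIndex T (X ^ n) : ℝ) ≤ C * (n : ℝ) ^ α := by
  intro R _ _ T hT d hd a ha hrec hunit
  have hprime (P : PrimeSpectrum R) : SublinearlyInto T P.asIdeal := by
    have hmax : P.asIdeal.IsMaximal := P.isPrime.isMaximal'
    let := Ideal.Quotient.field P.asIdeal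
    let : Fintype (R ⧸ P.asIdeal) := Fintype.ofFinite _
    let φ := Ideal.Quotient.mk P.asIdeal
    have hsurj : Function.Surjective φ := Ideal.Quotient.mk_surjective
    obtain ⟨α, hα, C, hC, hbound⟩ := H (R ⧸ P.asIdeal) (baseChangeEnd φ T)
      (degree_baseChangeEnd_lt hsurj hT) d hd (fun i => (a i).map φ)
      (fun i hi => degree_map_le.trans (ha i hi))
      (fun n hn => by
        have hX (m : ℕ) : baseChangeEnd φ T (X ^ m) = (T (X ^ m)).map φ := by
          simpa using baseChangeEnd_map φ T (X ^ m)
        simp only [hX, hrec n hn, Polynomial.map_sum, Polynomial.map_mul])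
      (by
        rw [coeff_map]
        exact (hunit.map φ).ne_zero)
    rw [← Ideal.mk_ker (I := P.asIdeal)]
    exact sublinearlyInto_ker hsurj hT hα hC hbound
  obtain ⟨Z, hZ⟩ := PrimeSpectrum.exists_primeSpectrum_prod_le R (⊥ : Ideal R)
  refine ((SublinearlyInto.prod hT (Z.map PrimeSpectrum.asIdeal) ?_).mono
    hZ).exists_nilpIndex_le
  intro I hI
  obtain ⟨P, -, rfl⟩ := Multiset.mem_map.mp hI
  exact hprime P
end

section
/- Let p be a prime and q = p^k ≥ 3 a power of p. Let T : F_p[y] → F_p[y] be an F_p-linear operator with deg T(f) < deg f for every nonzero f, and suppose there exist a ∈ F_p and polynomials c_1, …, c_q ∈ F_p[y] with deg c_i < i for 1 ≤ i ≤ q−1 and c_q = a·y^q + r for some r with deg r < q, such that T(y^n) = −( c_1·T(y^{n−1}) + ⋯ + c_q·T(y^{n−q}) ) for all n ≥ q (i.e., the companion polynomial is X^q + a·y^q + terms of total degree < q). Then there is a constant C > 0 such that N_T(y^n) ≤ C·n^{log(q−1)/log q} for all n ≥ 1. -/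
open Polynomial

/-- The content of `n` with respect to the base `s + 1`: the digits of `n` in base `s + 1`,
read in base `s`. -/
def digitContent (s n : ℕ) : ℕ := Nat.ofDigits s (Nat.digits (s + 1) n)

section Content

variable {s : ℕ}

theorem digitContent_zero (s : ℕ) : digitContent s 0 = 0 := by simp [digitContent]

theorem digitContent_rec (hs : 1 ≤ s) (n : ℕ) :
    digitContent s n = n % (s + 1) + s * digitContent s (n / (s + 1)) := by
  rcases Nat.eq_zero_or_pos n with rfl | hn
  · simp [digitContent]
  · rw [digitContent, Nat.digits_def' (by omega) hn, Nat.ofDigits_cons]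
    simp [digitContent]

theorem digitContent_add_mul (hs : 1 ≤ s) (A : ℕ) {B : ℕ} (hB : B < s + 1) :
    digitContent s (B + (s + 1) * A) = B + s * digitContent s A := by
  rw [digitContent_rec hs, Nat.add_mul_mod_self_left, Nat.mod_eq_of_lt hB,
    Nat.add_mul_div_left _ _ (by omega), Nat.div_eq_of_lt hB, zero_add]

theorem digitContent_of_lt (hs : 1 ≤ s) {n : ℕ} (hn : n < s + 1) : digitContent s n = n := by
  simpa [digitContent_zero] using digitContent_add_mul hs 0 hn

theorem digitContent_succ_le (hs : 1 ≤ s) (n : ℕ) :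
    digitContent s (n + 1) ≤ digitContent s n + 1 := by
  induction n using Nat.strong_induction_on with
  | _ n ih =>
    obtain ⟨A, B, hB, rfl⟩ : ∃ A B, B < s + 1 ∧ n = B + (s + 1) * A :=
      ⟨n / (s + 1), n % (s + 1), Nat.mod_lt _ (by omega), (Nat.mod_add_div _ _).symm⟩
    rw [digitContent_add_mul hs A hB]
    rcases Nat.lt_or_ge (B + 1) (s + 1) with h | h
    · rw [show B + (s + 1) * A + 1 = (B + 1) + (s + 1) * A by ring, digitContent_add_mul hs A h]
      omega
    · obtain rfl : B = s := by omega
      rw [show B + (B + 1) * A + 1 = 0 + (B + 1) * (A + 1) by ring,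
        digitContent_add_mul hs _ (by omega)]
      have := ih A (by nlinarith)
      nlinarith

theorem digitContent_le_self (hs : 1 ≤ s) (n : ℕ) : digitContent s n ≤ n := by
  induction n with
  | zero => simp [digitContent_zero]
  | succ n ih => exact (digitContent_succ_le hs n).trans (by omega)

theorem digitContent_add_le (hs : 1 ≤ s) (a b : ℕ) :
    digitContent s (a + b) ≤ digitContent s a + digitContent s b := by
  induction a using Nat.strong_induction_on generalizing b with
  | _ a ih =>
    rcases Nat.eq_zero_or_pos a with rfl | ha
    · simp
    have h1 := ih (a / (s + 1)) (Nat.div_lt_self ha (by omega)) (b / (s + 1))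
    have h2 := digitContent_succ_le hs (a / (s + 1) + b / (s + 1))
    have hA := Nat.mod_lt a (show 0 < s + 1 by omega)
    have hB := Nat.mod_lt b (show 0 < s + 1 by omega)
    have hab : a + b = (a % (s + 1) + b % (s + 1)) + (s + 1) * (a / (s + 1) + b / (s + 1)) := by
      conv_lhs => rw [← Nat.mod_add_div a (s + 1), ← Nat.mod_add_div b (s + 1)]
      ring
    rw [digitContent_rec hs a, digitContent_rec hs b, hab]
    generalize a / (s + 1) = a' at *
    generalize b / (s + 1) = b' at *
    generalize a % (s + 1) = x at *
    generalize b % (s + 1) = y at *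
    rcases Nat.lt_or_ge (x + y) (s + 1) with h | h
    · rw [digitContent_add_mul hs _ h]
      nlinarith
    · obtain ⟨z, hz⟩ := Nat.exists_eq_add_of_le h
      rw [show x + y + (s + 1) * (a' + b') = z + (s + 1) * (a' + b' + 1) by rw [hz]; ring,
        digitContent_add_mul hs _ (by omega)]
      nlinarith

theorem digitContent_pow_mul (hs : 1 ≤ s) (m j : ℕ) :
    digitContent s ((s + 1) ^ m * j) = s ^ m * digitContent s j := by
  induction m with
  | zero => simp
  | succ m ih =>
    have := digitContent_add_mul hs ((s + 1) ^ m * j) (show 0 < s + 1 by omega)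
    rw [zero_add, zero_add, ih] at this
    rw [pow_succ', mul_assoc, this, pow_succ', mul_assoc]

/-- Subtracting `i * (s + 1) ^ m` lowers the content by at least `(i - 1) * s ^ m` when the
leading digit is in position `m + 1`. -/
theorem digitContent_sub_add_le (hs : 1 ≤ s) (m : ℕ) {n i : ℕ} (hi : i + 1 ≤ s + 1)
    (hn : (s + 1) ^ (m + 1) ≤ n) (hn' : n < (s + 1) ^ (m + 2)) :
    digitContent s (n - (s + 1) ^ m * (i + 1)) + s ^ m * i ≤ digitContent s n := by
  induction m generalizing n with
  | zero =>
    obtain ⟨A, B, hB, rfl⟩ : ∃ A B, B < s + 1 ∧ n = B + (s + 1) * A :=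
      ⟨n / (s + 1), n % (s + 1), Nat.mod_lt _ (by omega), (Nat.mod_add_div _ _).symm⟩
    simp only [zero_add, pow_one, pow_zero, one_mul] at hn hn' ⊢
    have hA : A < s + 1 := by nlinarith
    obtain ⟨A, rfl⟩ : ∃ A', A = A' + 1 :=
      Nat.exists_eq_succ_of_ne_zero (by rintro rfl; omega)
    rw [digitContent_add_mul hs _ hB, digitContent_of_lt hs hA]
    rcases Nat.lt_or_ge B (i + 1) with h | h
    · have : B + (s + 1) * (A + 1) - (i + 1) = (B + (s - i)) + (s + 1) * A := by
        rw [mul_add]; omega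
      rw [this, digitContent_add_mul hs _ (by omega), digitContent_of_lt hs (by omega)]
      rw [mul_add]; omega
    · have : B + (s + 1) * (A + 1) - (i + 1) = (B - (i + 1)) + (s + 1) * (A + 1) := by
        omega
      rw [this, digitContent_add_mul hs _ (by omega), digitContent_of_lt hs hA]
      omega
  | succ m ih =>
    obtain ⟨A, B, hB, rfl⟩ : ∃ A B, B < s + 1 ∧ n = B + (s + 1) * A :=
      ⟨n / (s + 1), n % (s + 1), Nat.mod_lt _ (by omega), (Nat.mod_add_div _ _).symm⟩
    rw [pow_succ'] at hn hn'
    have hA : (s + 1) ^ (m + 1) ≤ A := by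
      by_contra! h
      nlinarith
    have hA' : A < (s + 1) ^ (m + 2) := by
      by_contra! h
      nlinarith [Nat.mul_le_mul_left (s + 1) h]
    have hle : (s + 1) ^ m * (i + 1) ≤ A :=
      (Nat.mul_le_mul_left _ hi).trans (by rwa [← pow_succ])
    obtain ⟨D, rfl⟩ := Nat.exists_eq_add_of_le hle
    have h := ih hA hA'
    rw [Nat.add_sub_cancel_left] at h
    have : B + (s + 1) * ((s + 1) ^ m * (i + 1) + D) - (s + 1) ^ (m + 1) * (i + 1)
        = B + (s + 1) * D := by
      rw [Nat.sub_eq_iff_eq_add] <;> rw [pow_succ'] <;> nlinarith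
    rw [this, digitContent_add_mul hs _ hB, digitContent_add_mul hs _ hB, pow_succ']
    nlinarith

theorem digitContent_add_two_le (hs : 2 ≤ s) (m : ℕ) {n : ℕ} (hn : n < (s + 1) ^ m) :
    digitContent s n + 2 ≤ 2 * s ^ m := by
  induction m generalizing n with
  | zero =>
    obtain rfl : n = 0 := by simpa using hn
    simp [digitContent_zero]
  | succ m ih =>
    have h := ih (n := n / (s + 1)) (Nat.div_lt_of_lt_mul (by rwa [← pow_succ']))
    have hB := Nat.mod_lt n (show 0 < s + 1 by omega)
    rw [digitContent_rec (by omega) n, pow_succ']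
    nlinarith

theorem digitContent_le_rpow (hs : 2 ≤ s) {n : ℕ} (hn : 1 ≤ n) :
    (digitContent s n : ℝ) ≤ 2 * s * (n : ℝ) ^ (Real.log s / Real.log ((s + 1 : ℕ) : ℝ)) := by
  have hs0 : (0 : ℝ) < s := by positivity
  have hlog : 0 < Real.log ((s + 1 : ℕ) : ℝ) :=
    Real.log_pos (by exact_mod_cast (by omega : 1 < s + 1))
  have hbase : ((s + 1 : ℕ) : ℝ) ^ (Real.log s / Real.log ((s + 1 : ℕ) : ℝ)) = s := by
    rw [Real.rpow_def_of_pos (by positivity), mul_div_cancel₀ _ hlog.ne', Real.exp_log hs0]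
  have hα : 0 ≤ Real.log s / Real.log ((s + 1 : ℕ) : ℝ) :=
    div_nonneg (Real.log_natCast_nonneg s) hlog.le
  set α := Real.log s / Real.log ((s + 1 : ℕ) : ℝ)
  have h1 : digitContent s n ≤ 2 * s * s ^ Nat.log (s + 1) n := by
    have := digitContent_add_two_le hs _ (Nat.lt_pow_succ_log_self (b := s + 1) (by omega) n)
    rw [pow_succ'] at this
    nlinarith
  have h2 : (s : ℝ) ^ Nat.log (s + 1) n ≤ (n : ℝ) ^ α := by
    calc (s : ℝ) ^ Nat.log (s + 1) n
        = (((s + 1 : ℕ) : ℝ) ^ Nat.log (s + 1) n) ^ α := by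
          rw [← hbase, ← Real.rpow_mul_natCast (by positivity), mul_comm,
            Real.rpow_natCast_mul (by positivity)]
      _ ≤ (n : ℝ) ^ α := by
          apply Real.rpow_le_rpow (by positivity) _ hα
          exact_mod_cast Nat.pow_log_le_self (s + 1) (by omega)
  calc (digitContent s n : ℝ) ≤ 2 * s * (s : ℝ) ^ Nat.log (s + 1) n := by exact_mod_cast h1
    _ ≤ _ := by gcongr

end Content

section Recursion

variable {R : Type*} [CommRing R]

/-- The polynomials all of whose monomials have content less than `N`. -/
def digitContentLT (R : Type*) [CommRing R] (s N : ℕ) : Submodule R R[X] where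
  carrier := {f | ∀ l, N ≤ digitContent s l → f.coeff l = 0}
  add_mem' hf hg l hl := by simp [hf l hl, hg l hl]
  zero_mem' := by simp
  smul_mem' a f hf l hl := by simp [hf l hl]

theorem mul_mem_digitContentLT {s d N : ℕ} (hs : 1 ≤ s) {f g : R[X]}
    (hf : f ∈ digitContentLT R s (d + 1)) (hg : g ∈ digitContentLT R s N) :
    f * g ∈ digitContentLT R s (d + N) := by
  intro l hl
  rw [coeff_mul]
  refine Finset.sum_eq_zero fun x hx ↦ ?_
  rw [Finset.HasAntidiagonal.mem_antidiagonal] at hx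
  have h := digitContent_add_le hs x.1 x.2
  rw [hx] at h
  rcases Nat.lt_or_ge d (digitContent s x.1) with h' | h'
  · rw [hf _ h', zero_mul]
  · rw [hg _ (by omega), mul_zero]

/-- If the operator `T` lowers the content of monomials then it lowers the content of all
polynomials. -/
theorem map_mem_digitContentLT {s : ℕ} {T : Module.End R R[X]}
    (hT : ∀ n, T (X ^ n) ∈ digitContentLT R s (digitContent s n)) {N : ℕ} {f : R[X]}
    (hf : f ∈ digitContentLT R s (N + 1)) : T f ∈ digitContentLT R s N := by
  rw [f.as_sum_support_C_mul_X_pow, map_sum]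
  refine Submodule.sum_mem _ fun n hn ↦ ?_
  rw [← smul_eq_C_mul, map_smul]
  refine Submodule.smul_mem _ _ fun l hl ↦ hT n l (le_trans ?_ hl)
  by_contra! h
  exact mem_support_iff.mp hn (hf n h)

theorem nilpIndex_X_pow_le {R : Type} [CommRing R] {s : ℕ} {T : Module.End R R[X]}
    (hT : ∀ n, T (X ^ n) ∈ digitContentLT R s (digitContent s n)) (n : ℕ) :
    nilpIndex T (X ^ n) ≤ digitContent s n := by
  refine csSup_le' fun k hk ↦ ?_
  by_contra! h
  apply hk
  have key : ∀ j ≤ digitContent s n + 1,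
      (T ^ j) (X ^ n) ∈ digitContentLT R s (digitContent s n + 1 - j) := by
    intro j
    induction j with
    | zero =>
      intro _ l hl
      rw [pow_zero, Module.End.one_apply, coeff_X_pow, if_neg]
      rintro rfl
      omega
    | succ j ih =>
      intro hj
      rw [pow_succ', Module.End.mul_apply]
      refine map_mem_digitContentLT hT ?_
      rw [show digitContent s n + 1 - (j + 1) + 1 = digitContent s n + 1 - j by omega]
      exact ih (by omega)
  have hzero : (T ^ (digitContent s n + 1)) (X ^ n) = 0 := by
    ext l
    simpa using key _ le_rfl l (by omega)
  obtain ⟨j, rfl⟩ := Nat.exists_eq_add_of_le (show digitContent s n + 1 ≤ k from h)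
  rw [add_comm, pow_add, Module.End.mul_apply, hzero, map_zero]

/-- In characteristic `p`, a linear recurrence may be raised to a power of the Frobenius. -/
theorem recurrence_frobenius {A : Type*} [CommRing A] (p : ℕ) [Fact p.Prime] [CharP A p]
    (q e : ℕ) (c t : ℕ → A)
    (ht : ∀ n, q ≤ n → t n = -∑ i ∈ Finset.Icc 1 q, c i * t (n - i)) (n : ℕ)
    (hn : q * p ^ e ≤ n) :
    t n = -∑ i ∈ Finset.Icc 1 q, c i ^ p ^ e * t (n - i * p ^ e) := by
  let L : A[X] →ₗ[A] A := Polynomial.lsum fun n ↦ LinearMap.mulRight A (t n)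
  have hL : ∀ (a : A) (n : ℕ), L (C a * X ^ n) = a * t n := by
    intro a n
    simp [L, Polynomial.lsum_apply, C_mul_X_pow_eq_monomial, sum_monomial_index]
  have hL' : ∀ n : ℕ, L (X ^ n) = t n := fun n ↦ by simpa using hL 1 n
  let P : A[X] := X ^ q + ∑ i ∈ Finset.Icc 1 q, C (c i) * X ^ (q - i)
  have hP : ∀ G : A[X], L (P * G) = 0 := by
    intro G
    induction G using Polynomial.induction_on' with
    | add f g hf hg => rw [mul_add, map_add, hf, hg, add_zero]
    | monomial j a =>
      have h : P * monomial j a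
          = a • (X ^ (j + q) + ∑ i ∈ Finset.Icc 1 q, C (c i) * X ^ (j + q - i)) := by
        rw [← C_mul_X_pow_eq_monomial, smul_eq_C_mul]
        simp only [P, add_mul, mul_add, Finset.sum_mul, Finset.mul_sum]
        congr 1
        · ring
        · refine Finset.sum_congr rfl fun i hi ↦ ?_
          rw [Nat.add_sub_assoc (Finset.mem_Icc.mp hi).2]
          ring
      rw [h, map_smul, map_add, map_sum, hL', ht _ (by omega)]
      simp [hL]
  obtain ⟨j, rfl⟩ := Nat.exists_eq_add_of_le hn
  have hpow : P ^ p ^ e * X ^ j = X ^ (q * p ^ e + j)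
      + ∑ i ∈ Finset.Icc 1 q, C (c i ^ p ^ e) * X ^ (q * p ^ e + j - i * p ^ e) := by
    simp only [P]
    rw [add_pow_char_pow, sum_pow_char_pow, add_mul, Finset.sum_mul]
    congr 1
    · ring
    · refine Finset.sum_congr rfl fun i hi ↦ ?_
      have hle := Nat.mul_le_mul_right (p ^ e) (Finset.mem_Icc.mp hi).2
      rw [mul_pow, ← C_pow, ← pow_mul, mul_assoc, ← pow_add, Nat.sub_mul]
      congr 2
      omega
  have h0 : L (P ^ p ^ e * X ^ j) = 0 := by
    obtain ⟨d, hd⟩ := Nat.exists_eq_succ_of_ne_zero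
      (pow_ne_zero e (Fact.out : p.Prime).ne_zero)
    rw [hd, pow_succ', mul_assoc]
    exact hP _
  rw [hpow, map_add, map_sum, hL'] at h0
  simp only [hL] at h0
  exact eq_neg_of_add_eq_zero_left h0

theorem coeff_pow_card_pow (p : ℕ) [Fact p.Prime] (e : ℕ) (f : (ZMod p)[X]) (l : ℕ) :
    (f ^ p ^ e).coeff l = if p ^ e ∣ l then f.coeff (l / p ^ e) else 0 := by
  have h : f ^ p ^ e = expand (ZMod p) (p ^ e) f := by
    induction e with
    | zero => simp
    | succ e ih =>
      rw [pow_succ, pow_mul, ih, ← ZMod.expand_card, expand_expand, mul_comm]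
  rw [h, coeff_expand (pow_pos (Fact.out : p.Prime).pos e)]

end Recursion

/-- **Toy case of the Nilpotence Growth Theorem.** -/
theorem stmt3 (p : ℕ) (hp : p.Prime) (k q : ℕ) (hq : q = p ^ k) (hq3 : 3 ≤ q)
    (T : Module.End (ZMod p) (Polynomial (ZMod p)))
    (hdeglow : ∀ f : Polynomial (ZMod p), f ≠ 0 → (T f).degree < f.degree)
    (a : ZMod p) (c : ℕ → Polynomial (ZMod p)) (r : Polynomial (ZMod p))
    (hci : ∀ i, 1 ≤ i → i ≤ q - 1 → (c i).degree < (i : WithBot ℕ))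
    (hcq : c q = C a * X ^ q + r)
    (hr : r.degree < (q : WithBot ℕ))
    (hrec : ∀ n, q ≤ n →
      T ((X : Polynomial (ZMod p)) ^ n) = -∑ i ∈ Finset.Icc 1 q, c i * T (X ^ (n - i))) :
    ∃ Cst : ℝ, 0 < Cst ∧ ∀ n : ℕ, 1 ≤ n →
      (nilpIndex T (X ^ n) : ℝ) ≤
        Cst * (n : ℝ) ^ (Real.log ((q - 1 : ℕ) : ℝ) / Real.log (q : ℝ)) := by
  have : Fact p.Prime := ⟨hp⟩
  obtain ⟨s, rfl⟩ : ∃ s, q = s + 1 := ⟨q - 1, by omega⟩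
  have hs : 1 ≤ s := by omega
  -- the monomials of the coefficients of the recursion have small content
  have hcoeff : ∀ i ≤ s, ∀ j, i < digitContent s j → (c (i + 1)).coeff j = 0 := by
    intro i hi j hj
    have hij : i + 1 ≤ j := Nat.succ_le_of_lt hj |>.trans (digitContent_le_self hs j)
    rcases hi.lt_or_eq with hi | rfl
    · exact coeff_eq_zero_of_degree_lt
        ((hci (i + 1) (by omega) (by omega)).trans_le (by exact_mod_cast hij))
    · rw [hcq, coeff_add, coeff_C_mul_X_pow, if_neg, zero_add]
      · exact coeff_eq_zero_of_degree_lt (hr.trans_le (by exact_mod_cast hij))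
      · rintro rfl
        have := digitContent_pow_mul hs 1 1
        rw [digitContent_of_lt hs (n := 1) (by omega)] at this
        simp only [pow_one, mul_one] at this
        omega
  have hcpow : ∀ m, ∀ i ≤ s,
      c (i + 1) ^ p ^ (k * m) ∈ digitContentLT (ZMod p) s (s ^ m * i + 1) := by
    intro m i hi l hl
    rw [coeff_pow_card_pow]
    split_ifs with hdvd
    · obtain ⟨j, rfl⟩ := hdvd
      rw [Nat.mul_div_cancel_left _ (pow_pos hp.pos _)]
      rw [pow_mul, ← hq, digitContent_pow_mul hs] at hl
      exact hcoeff i hi j (lt_of_mul_lt_mul_left hl (Nat.zero_le _))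
    · rfl
  have hT : ∀ n, T (X ^ n) ∈ digitContentLT (ZMod p) s (digitContent s n) := by
    intro n
    induction n using Nat.strong_induction_on with
    | _ n ih =>
      rcases Nat.lt_or_ge n (s + 1) with hn | hn
      · intro l hl
        rw [digitContent_of_lt hs hn] at hl
        have h := hdeglow (X ^ n) (pow_ne_zero n X_ne_zero)
        rw [degree_X_pow] at h
        exact coeff_eq_zero_of_degree_lt
          (h.trans_le (by exact_mod_cast hl.trans (digitContent_le_self hs l)))
      · obtain ⟨m, hm⟩ : ∃ m, Nat.log (s + 1) n = m + 1 :=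
          Nat.exists_eq_succ_of_ne_zero (Nat.log_pos (by omega) hn).ne'
        have hlow : (s + 1) ^ (m + 1) ≤ n := hm ▸ Nat.pow_log_le_self (s + 1) (by omega)
        have hhigh : n < (s + 1) ^ (m + 2) := by
          have := Nat.lt_pow_succ_log_self (b := s + 1) (by omega) n
          rwa [hm] at this
        have hpk : p ^ (k * m) = (s + 1) ^ m := by rw [pow_mul, ← hq]
        have hexp := recurrence_frobenius p (s + 1) (k * m) c (fun n ↦ T (X ^ n)) hrec n
          (by rwa [hpk, ← pow_succ'])
        rw [hexp]
        refine Submodule.neg_mem _ (Submodule.sum_mem _ fun i hi ↦ ?_)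
        obtain ⟨hi1, hi2⟩ := Finset.mem_Icc.mp hi
        obtain ⟨i, rfl⟩ : ∃ i', i = i' + 1 := ⟨i - 1, by omega⟩
        have hpos : 0 < (i + 1) * p ^ (k * m) := Nat.mul_pos (by omega) (pow_pos hp.pos _)
        have hmem := mul_mem_digitContentLT hs (hcpow m i (by omega))
          (ih (n - (i + 1) * p ^ (k * m)) (by omega))
        have hle := digitContent_sub_add_le hs m hi2 hlow hhigh
        intro l hl
        refine hmem l (le_trans ?_ hl)
        rw [hpk, mul_comm (i + 1)]
        omega
  refine ⟨2 * s, by positivity, fun n hn ↦ ?_⟩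
  rw [Nat.add_sub_cancel]
  exact (Nat.cast_le.mpr (nilpIndex_X_pow_le hT n)).trans (digitContent_le_rpow (by omega) hn)
end

section
/- Let b, d, D be integers with 1 ≤ D ≤ d ≤ b and β := b − D ≥ 2, and set c(n) := c_{b,β}(n/d) for integers n ≥ 0. Suppose that d = b, or d = b − 1, or D ≤ b/2. Then for every pair of integers (i,j) with either (i,j) = (d,d) or 0 ≤ j and j + D ≤ i ≤ d, and all integers n, m, k with k ≥ 0, d·b^k ≤ n < d·b^{k+1}, and j·b^k ≤ m, one has c(n) − c(n − i·b^k) ≥ c(m) − c(m − j·b^k). -/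
/-- The `i`-th base-`b` digit (for `i : ℤ`) of a real number `x ≥ 0`:
`⌊x·b^{−i}⌋ mod b`. -/
noncomputable def bDigit (b : ℕ) (x : ℝ) (i : ℤ) : ℤ :=
  ⌊x * (b : ℝ) ^ (-i)⌋ % b

/-- The `(b,β)`-content of a real number `x ≥ 0`: read the base-`b` digits of `x`
in base `β`. -/
noncomputable def content (b β : ℕ) (x : ℝ) : ℝ :=
  ∑' i : ℤ, (bDigit b x i : ℝ) * (β : ℝ) ^ i

theorem summable_mul_zpow_of_bounded {β : ℕ} (hβ : 2 ≤ β) {f : ℤ → ℝ} {C : ℝ}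
    (hf : ∀ i, |f i| ≤ C) {N : ℕ} (hN : ∀ i : ℤ, (N : ℤ) ≤ i → f i = 0) :
    Summable fun i : ℤ ↦ f i * (β : ℝ) ^ i := by
  have hβ' : (1 : ℝ) < β := by exact_mod_cast hβ
  refine Summable.of_nat_of_neg ?_ ?_
  · refine summable_of_ne_finset_zero (s := Finset.range N) fun i hi ↦ ?_
    rw [Finset.mem_range, not_lt] at hi
    rw [hN i (by exact_mod_cast hi), zero_mul]
  · have hgeo : Summable fun n : ℕ ↦ C * ((β : ℝ)⁻¹) ^ n :=
      (summable_geometric_of_lt_one (by positivity) (inv_lt_one_of_one_lt₀ hβ')).mul_left C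
    refine hgeo.of_norm_bounded fun n ↦ ?_
    rw [Real.norm_eq_abs, abs_mul, zpow_neg, zpow_natCast, ← inv_pow,
      abs_of_nonneg (by positivity : (0 : ℝ) ≤ ((β : ℝ)⁻¹) ^ n)]
    exact mul_le_mul_of_nonneg_right (hf _) (by positivity)

theorem exists_floor_mul_zpow_eq_zero {b : ℕ} (hb : 2 ≤ b) {x : ℝ} (hx : 0 ≤ x) :
    ∃ N : ℕ, ∀ i : ℤ, (N : ℤ) ≤ i → ⌊x * (b : ℝ) ^ (-i)⌋ = 0 := by
  have hb' : (1 : ℝ) < b := by exact_mod_cast hb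
  obtain ⟨N, hN⟩ := pow_unbounded_of_one_lt x hb'
  refine ⟨N, fun i hi ↦ ?_⟩
  rw [Int.floor_eq_zero_iff]
  refine ⟨by positivity, ?_⟩
  rw [zpow_neg, ← div_eq_mul_inv, div_lt_one (by positivity)]
  refine hN.trans_le ?_
  rw [← zpow_natCast]
  exact zpow_le_zpow_right₀ hb'.le hi

theorem abs_bDigit_le {b : ℕ} (hb : 2 ≤ b) (x : ℝ) (i : ℤ) : |(bDigit b x i : ℝ)| ≤ b := by
  have h0 : 0 ≤ bDigit b x i := Int.emod_nonneg _ (by omega)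
  have h1 : bDigit b x i < b := Int.emod_lt_of_pos _ (by omega)
  rw [abs_of_nonneg (by exact_mod_cast h0)]
  exact_mod_cast h1.le

theorem summable_content {b β : ℕ} (hb : 2 ≤ b) (hβ : 2 ≤ β) {x : ℝ} (hx : 0 ≤ x) :
    Summable fun i : ℤ ↦ (bDigit b x i : ℝ) * (β : ℝ) ^ i := by
  obtain ⟨N, hN⟩ := exists_floor_mul_zpow_eq_zero hb hx
  refine summable_mul_zpow_of_bounded hβ (abs_bDigit_le hb x) (N := N) fun i hi ↦ ?_
  rw [bDigit, hN i hi]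
  simp

theorem bDigit_eq_sub {b : ℕ} (hb : 2 ≤ b) (x : ℝ) (i : ℤ) :
    bDigit b x i = ⌊x * (b : ℝ) ^ (-i)⌋ - b * ⌊x * (b : ℝ) ^ (-(i + 1))⌋ := by
  have hb0 : (b : ℝ) ≠ 0 := by positivity
  have h : x * (b : ℝ) ^ (-(i + 1)) = x * (b : ℝ) ^ (-i) / b := by
    rw [neg_add, zpow_add₀ hb0, zpow_neg_one, mul_div_assoc, div_eq_mul_inv]
  rw [h, Int.floor_div_natCast, bDigit, Int.emod_def]

/-- Each carry in the base-`b` addition `x + y` loses `b - β` units of its position. -/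
theorem content_add_le {b β : ℕ} (hβ : 2 ≤ β) (hb : β ≤ b) {x y : ℝ} (hx : 0 ≤ x)
    (hy : 0 ≤ y) : content b β (x + y) ≤ content b β x + content b β y := by
  have hb2 : 2 ≤ b := hβ.trans hb
  have hβ0 : (β : ℝ) ≠ 0 := by positivity
  set carry : ℤ → ℤ := fun i ↦ ⌊(x + y) * (b : ℝ) ^ (-i)⌋ - ⌊x * (b : ℝ) ^ (-i)⌋
    - ⌊y * (b : ℝ) ^ (-i)⌋ with hcarry
  have hcarry0 : ∀ i, 0 ≤ carry i := fun i ↦ by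
    have := Int.le_floor_add (x * (b : ℝ) ^ (-i)) (y * (b : ℝ) ^ (-i))
    rw [← add_mul] at this
    simp only [hcarry]; omega
  have hcarry1 : ∀ i, carry i ≤ 1 := fun i ↦ by
    have := Int.le_floor_add_floor (x * (b : ℝ) ^ (-i)) (y * (b : ℝ) ^ (-i))
    rw [← add_mul] at this
    simp only [hcarry]; omega
  have hcs : Summable fun i : ℤ ↦ (carry i : ℝ) * (β : ℝ) ^ i := by
    obtain ⟨N, hN⟩ := exists_floor_mul_zpow_eq_zero hb2 (add_nonneg hx hy)
    obtain ⟨N₁, hN₁⟩ := exists_floor_mul_zpow_eq_zero hb2 hx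
    obtain ⟨N₂, hN₂⟩ := exists_floor_mul_zpow_eq_zero hb2 hy
    refine summable_mul_zpow_of_bounded hβ (C := 1) (N := N + N₁ + N₂) (fun i ↦ ?_)
      fun i hi ↦ ?_
    · rw [abs_of_nonneg (by exact_mod_cast hcarry0 i)]
      exact_mod_cast hcarry1 i
    · push_cast at hi
      simp only [hcarry, hN i (by omega), hN₁ i (by omega), hN₂ i (by omega)]
      simp
  have hshift : (fun i : ℤ ↦ (carry (i + 1) : ℝ) * (β : ℝ) ^ (i + 1)) =
      (fun i : ℤ ↦ (carry i : ℝ) * (β : ℝ) ^ i) ∘ Equiv.addRight (1 : ℤ) := rfl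
  have hcs' : Summable fun i : ℤ ↦ (carry (i + 1) : ℝ) * (β : ℝ) ^ (i + 1) := by
    rw [hshift]; exact (Equiv.summable_iff _).mpr hcs
  have htsum : ∑' i : ℤ, (carry (i + 1) : ℝ) * (β : ℝ) ^ (i + 1) =
      ∑' i : ℤ, (carry i : ℝ) * (β : ℝ) ^ i :=
    (Equiv.addRight (1 : ℤ)).tsum_eq fun i : ℤ ↦ (carry i : ℝ) * (β : ℝ) ^ i
  have hxs := summable_content hb2 hβ hx
  have hys := summable_content hb2 hβ hy
  have hxys := summable_content hb2 hβ (add_nonneg hx hy)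
  have key : content b β (x + y) + ∑' i : ℤ, (carry (i + 1) : ℝ) * (β : ℝ) ^ (i + 1) ≤
      content b β x + content b β y + ∑' i : ℤ, (carry i : ℝ) * (β : ℝ) ^ i := by
    unfold content
    rw [← hxys.tsum_add hcs', ← hxs.tsum_add hys, ← (hxs.add hys).tsum_add hcs]
    refine (hxys.add hcs').tsum_le_tsum (fun i ↦ ?_) ((hxs.add hys).add hcs)
    have hdig : bDigit b (x + y) i + b * carry (i + 1) =
        bDigit b x i + bDigit b y i + carry i := by
      simp only [bDigit_eq_sub hb2, hcarry]; ring
    have hdig' : (bDigit b (x + y) i : ℝ) + b * carry (i + 1) =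
        bDigit b x i + bDigit b y i + carry i := by exact_mod_cast hdig
    rw [← add_mul, ← add_mul, ← hdig', zpow_add_one₀ hβ0, add_mul]
    have h1 : (0 : ℝ) ≤ carry (i + 1) := by exact_mod_cast hcarry0 (i + 1)
    have h2 : (β : ℝ) ≤ b := by exact_mod_cast hb
    have h3 : (0 : ℝ) ≤ (β : ℝ) ^ i := by positivity
    have h4 := mul_le_mul_of_nonneg_right h2 (mul_nonneg h1 h3)
    linarith
  linarith

theorem content_mul_base {b β : ℕ} (hb : 0 < b) (hβ : 0 < β) (x : ℝ) :
    content b β (b * x) = β * content b β x := by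
  have hb0 : (b : ℝ) ≠ 0 := by positivity
  have hβ0 : (β : ℝ) ≠ 0 := by positivity
  unfold content
  rw [← (Equiv.addRight (1 : ℤ)).tsum_eq, ← tsum_mul_left]
  refine tsum_congr fun i ↦ ?_
  have h : (b : ℝ) * x * (b : ℝ) ^ (-(i + 1)) = x * (b : ℝ) ^ (-i) := by
    rw [neg_add, zpow_add₀ hb0, zpow_neg_one]; field_simp
  simp only [Equiv.coe_addRight, bDigit, h, zpow_add_one₀ hβ0]
  ring

theorem content_pow_mul {b β : ℕ} (hb : 0 < b) (hβ : 0 < β) (k : ℕ) (x : ℝ) :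
    content b β (b ^ k * x) = β ^ k * content b β x := by
  induction k with
  | zero => simp
  | succ k ih => rw [pow_succ', mul_assoc, content_mul_base hb hβ, ih, pow_succ', mul_assoc]

theorem content_natCast_add {b β : ℕ} (hb : 2 ≤ b) (hβ : 2 ≤ β) {a : ℕ} (ha : a < b) {x : ℝ}
    (hx : 0 ≤ x) (hx1 : x < 1) : content b β (a + x) = a + content b β x := by
  have hb1 : (1 : ℝ) < b := by exact_mod_cast hb
  have hdig : ∀ i, bDigit b (a + x) i = bDigit b x i + if i = 0 then (a : ℤ) else 0 := by
    intro i
    rcases lt_trichotomy i 0 with hi | rfl | hi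
    · obtain ⟨n, rfl⟩ : ∃ n : ℕ, i = -(n + 1 : ℕ) := ⟨(-i - 1).toNat, by omega⟩
      rw [if_neg hi.ne, add_zero, bDigit, bDigit, neg_neg, zpow_natCast, add_mul]
      have : (a : ℝ) * (b : ℝ) ^ (n + 1) = ((b * (a * b ^ n) : ℕ) : ℝ) := by push_cast; ring
      rw [this, Int.floor_natCast_add]
      push_cast
      rw [add_comm, Int.add_mul_emod_self_left]
    · have h0 : ⌊x⌋ = 0 := Int.floor_eq_zero_iff.mpr ⟨hx, hx1⟩
      simp only [bDigit, neg_zero, zpow_zero, mul_one, Int.floor_natCast_add, h0, if_pos]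
      simp only [add_zero, Int.zero_emod, zero_add]
      exact Int.emod_eq_of_lt (by omega) (by omega)
    · have hlarge : ∀ y : ℝ, 0 ≤ y → y < b → ⌊y * (b : ℝ) ^ (-i)⌋ = 0 := by
        intro y hy hyb
        rw [Int.floor_eq_zero_iff]
        refine ⟨by positivity, ?_⟩
        rw [zpow_neg, ← div_eq_mul_inv, div_lt_one (by positivity)]
        refine hyb.trans_le ?_
        calc (b : ℝ) = (b : ℝ) ^ (1 : ℤ) := (zpow_one _).symm
          _ ≤ (b : ℝ) ^ i := zpow_le_zpow_right₀ hb1.le hi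
      have hab : (a : ℝ) + 1 ≤ b := by exact_mod_cast ha
      rw [if_neg hi.ne', bDigit, bDigit, hlarge x hx (by linarith),
        hlarge (a + x) (by positivity) (by linarith), add_zero]
  have hsingle : ∀ i : ℤ, (bDigit b (a + x) i : ℝ) * (β : ℝ) ^ i =
      (if i = 0 then (a : ℝ) else 0) + (bDigit b x i : ℝ) * (β : ℝ) ^ i := by
    intro i
    rw [hdig]
    split_ifs with h
    · subst h; push_cast; simp [add_comm]
    · simp
  unfold content
  rw [tsum_congr hsingle, Summable.tsum_add _ (summable_content hb hβ hx), tsum_ite_eq]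
  exact summable_of_ne_finset_zero (s := {0}) fun i hi ↦ if_neg (by simpa using hi)

theorem content_zero (b β : ℕ) : content b β 0 = 0 := by simp [content, bDigit]

theorem content_one {b β : ℕ} (hb : 2 ≤ b) (hβ : 2 ≤ β) : content b β 1 = 1 := by
  simpa [content_zero] using content_natCast_add hb hβ (a := 1) (by omega) le_rfl zero_lt_one

theorem content_sub_one {b β : ℕ} (hb : 2 ≤ b) (hβ : 2 ≤ β) {y : ℝ} (hy : 1 ≤ y) (hyb : y < b) :
    content b β (y - 1) = content b β y - 1 := by
  have hy0 : 0 ≤ y := by linarith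
  obtain ⟨a, ha⟩ : ∃ a : ℕ, ⌊y⌋₊ = a + 1 :=
    ⟨⌊y⌋₊ - 1, by have := (Nat.one_le_floor_iff y).mpr hy; omega⟩
  have hab : a + 1 < b := by rw [← ha]; exact (Nat.floor_lt hy0).mpr hyb
  have hle := Nat.floor_le hy0
  have hlt := Nat.lt_floor_add_one y
  rw [ha] at hle hlt
  have h1 := content_natCast_add hb hβ hab (x := y - (a + 1 : ℕ)) (by linarith) (by linarith)
  have h2 := content_natCast_add hb hβ (a := a) (by omega) (x := y - (a + 1 : ℕ))
    (by linarith) (by linarith)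
  rw [add_sub_cancel] at h1
  rw [show y - 1 = a + (y - (a + 1 : ℕ)) by push_cast; ring, h2, h1]
  push_cast; ring

/-- One step of the base-`b` long division of `u` by `d`. -/
theorem mul_content_div {b β d : ℕ} (hb : 2 ≤ b) (hβ : 2 ≤ β) {u : ℕ} (hu : u < d) :
    β * content b β (u / d) = ((u * b / d : ℕ) : ℝ) + content b β ((u * b % d : ℕ) / d) := by
  have hd : 0 < d := by omega
  have hd' : (0 : ℝ) < d := by exact_mod_cast hd
  have ha : u * b / d < b := by
    rw [Nat.div_lt_iff_lt_mul hd, mul_comm b]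
    exact Nat.mul_lt_mul_of_pos_right hu (by omega)
  have hr : u * b % d < d := Nat.mod_lt _ hd
  have hr1 : ((u * b % d : ℕ) : ℝ) / d < 1 := by
    rw [div_lt_one hd']; exact_mod_cast hr
  rw [← content_mul_base (by omega) (by omega), ← content_natCast_add hb hβ ha (by positivity) hr1]
  congr 1
  have : ((u * b : ℕ) : ℝ) = ((d * (u * b / d) + u * b % d : ℕ) : ℝ) := by rw [Nat.div_add_mod]
  push_cast at this
  field_simp
  linarith

theorem le_of_forall_mul_eq_add {β d : ℕ} (hβ : 2 ≤ β) {f g : ℕ → ℝ} {G : ℝ}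
    (hf : ∀ u < d, ∃ r < d, β * f u = g u + f r) (hg : ∀ u < d, g u ≤ G) {u : ℕ} (hu : u < d) :
    (β - 1) * f u ≤ G := by
  obtain ⟨w, hw, hmax⟩ := (Finset.range d).exists_max_image f ⟨u, Finset.mem_range.mpr hu⟩
  rw [Finset.mem_range] at hw
  obtain ⟨r, hr, hwr⟩ := hf w hw
  have h1 := hmax r (Finset.mem_range.mpr hr)
  have h2 := hmax u (Finset.mem_range.mpr hu)
  have h3 := hg w hw
  have h4 : (2 : ℝ) ≤ β := by exact_mod_cast hβ
  have h5 : (β - 1) * f u ≤ (β - 1) * f w := mul_le_mul_of_nonneg_left h2 (by linarith)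
  linarith

theorem content_div_le_two {b β d : ℕ} (hβ : 2 ≤ β) (hb : b ≤ 2 * β) (hdb : d < b) (hb2 : 2 ≤ b)
    {u : ℕ} (hu : u < d) : content b β (u / d) ≤ 2 := by
  have hd : 0 < d := by omega
  have hβ' : (2 : ℝ) ≤ β := by exact_mod_cast hβ
  have hb' : (b : ℝ) ≤ 2 * β := by exact_mod_cast hb
  have h := le_of_forall_mul_eq_add hβ (f := fun u ↦ content b β (u / d))
    (g := fun u ↦ ((u * b / d : ℕ) : ℝ)) (G := b - 2)
    (fun v hv ↦ ⟨_, Nat.mod_lt _ hd, mul_content_div hb2 hβ hv⟩) (fun v hv ↦ ?_) hu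
  · by_contra! hlt
    nlinarith
  · have : v * b / d + 1 < b := by
      by_contra! hge
      have h1 : (b - 1) * d ≤ v * b := by
        refine le_trans (Nat.mul_le_mul_right d ?_) (Nat.div_mul_le_self (v * b) d)
        omega
      obtain ⟨c, rfl⟩ : ∃ c, b = c + 1 := ⟨b - 1, by omega⟩
      obtain ⟨e, rfl⟩ : ∃ e, d = v + 1 + e := ⟨d - v - 1, by omega⟩
      rw [Nat.add_sub_cancel] at h1
      nlinarith
    have : ((v * b / d : ℕ) : ℝ) + 2 ≤ b := by exact_mod_cast this
    linarith

theorem content_div_le_linear {b β D d : ℕ} (hβ : 2 ≤ β) (hb : b = β + D)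
    {u : ℕ} (hu : u < d) :
    d * β * (β - 1) * content b β (u / d) ≤ (β - 1) * b * u + D * (d - 1) := by
  have hd : 0 < d := by omega
  have hd' : (0 : ℝ) < d := by exact_mod_cast hd
  have hβ' : (2 : ℝ) ≤ β := by exact_mod_cast hβ
  have hb' : (b : ℝ) = β + D := by exact_mod_cast hb
  have hstep : ∀ v < d, ∃ r < d, β * (d * content b β (v / d) - v) =
      D * v + (d * content b β (r / d) - r) := by
    intro v hv
    refine ⟨_, Nat.mod_lt (v * b) hd, ?_⟩
    have h := mul_content_div (b := b) (by omega) hβ hv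
    have hdiv : ((d * (v * b / d) + v * b % d : ℕ) : ℝ) = ((v * b : ℕ) : ℝ) := by
      rw [Nat.div_add_mod]
    push_cast at hdiv
    rw [hb'] at hdiv
    linear_combination d * h + hdiv
  obtain ⟨r, hr, hur⟩ := hstep u hu
  have h := le_of_forall_mul_eq_add hβ (f := fun u : ℕ ↦ d * content b β (u / d) - u)
    (g := fun u ↦ D * u) (G := D * (d - 1)) hstep (fun v hv ↦ ?_) hr
  · rw [hb']
    linear_combination h + (β - 1) * hur
  · have : (v : ℝ) + 1 ≤ d := by exact_mod_cast hv
    exact mul_le_mul_of_nonneg_left (by linarith) (by positivity)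

theorem content_div_add_content_div_le_one_of_add_two_le {b β D d : ℕ} (hβ : 2 ≤ β)
    (hb : b = β + D) (hD : 1 ≤ D) (hDb : 2 * D ≤ b) (hdb : d + 2 ≤ b) {u v : ℕ}
    (huv : u + v + D ≤ d) : content b β (u / d) + content b β (v / d) ≤ 1 := by
  have hd : 0 < d := by omega
  have hb2 : 2 ≤ b := by omega
  have hu := mul_content_div (b := b) hb2 hβ (show u < d by omega)
  have hv := mul_content_div (b := b) hb2 hβ (show v < d by omega)
  have hdivu := Nat.div_add_mod (u * b) d
  have hdivv := Nat.div_add_mod (v * b) d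
  have hr : u * b % d < d := Nat.mod_lt _ hd
  have hr' : v * b % d < d := Nat.mod_lt _ hd
  have hparity : 2 ∣ b → 2 ∣ d → 2 ∣ u * b % d := fun h1 h2 ↦
    (Nat.dvd_mod_iff h2).mpr (h1.mul_left u)
  generalize u * b % d = r at *
  generalize v * b % d = r' at *
  generalize u * b / d = a at *
  generalize v * b / d = a' at *
  obtain ⟨e, rfl⟩ : ∃ e, b = d + e := ⟨b - d, by omega⟩
  obtain ⟨g, hg⟩ : ∃ g, d = u + v + D + g := ⟨d - (u + v + D), by omega⟩
  have hβ' : (2 : ℝ) ≤ β := by exact_mod_cast hβ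
  suffices h : (a : ℝ) + a' + (content (d + e) β (r / d) + content (d + e) β (r' / d)) ≤ β by
    nlinarith
  rcases le_or_gt (a + a' + 4) β with hA | hA
  · have h1 := content_div_le_two hβ (by omega) (by omega) hb2 hr
    have h2 := content_div_le_two hβ (by omega) (by omega) hb2 hr'
    have h3 : (a : ℝ) + a' + 4 ≤ β := by exact_mod_cast hA
    linarith
  have hd' : (1 : ℝ) ≤ d := by exact_mod_cast hd
  have hD' : (1 : ℝ) ≤ D := by exact_mod_cast hD
  have hb' : (d : ℝ) + e = β + D := by exact_mod_cast hb
  have he : (2 : ℝ) ≤ e := by exact_mod_cast (show 2 ≤ e by omega)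
  have hg' : (d : ℝ) = u + v + D + g := by exact_mod_cast hg
  have hg0 : (0 : ℝ) ≤ g := by positivity
  have hβD : (D : ℝ) ≤ β := by exact_mod_cast (show D ≤ β by omega)
  have hdivu' : (d : ℝ) * a + r = u * (d + e) := by exact_mod_cast hdivu
  have hdivv' : (d : ℝ) * a' + r' = v * (d + e) := by exact_mod_cast hdivv
  have hA' : (β : ℝ) ≤ a + a' + 3 := by exact_mod_cast (show β ≤ a + a' + 3 by omega)
  have hR : (r : ℝ) + r' = (β - a - a') * d - D * e - g * (d + e) := by
    linear_combination hdivu' + hdivv' - (d + e) * hg' + d * hb'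
  have hslack : 4 * (D : ℝ) ≤
      D * ((d + e) * e - (β - a - a') * d) + g * (d + e) ^ 2 := by
    rcases le_or_gt β (a + a' + 2) with hA2 | hA2
    · have hA2' : (β : ℝ) ≤ a + a' + 2 := by exact_mod_cast hA2
      have hX : 4 ≤ ((d : ℝ) + e) * e - (β - a - a') * d := by
        nlinarith [mul_nonneg (zero_le_one.trans hd') (sub_nonneg.mpr hA2'),
          mul_nonneg (zero_le_one.trans hd') (sub_nonneg.mpr he)]
      have := mul_le_mul_of_nonneg_left hX (zero_le_one.trans hD')
      have : 0 ≤ (g : ℝ) * (d + e) ^ 2 := by positivity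
      linarith
    have hA3 : (β : ℝ) - a - a' = 3 := by
      have : (β : ℝ) = a + a' + 3 := by exact_mod_cast (show β = a + a' + 3 by omega)
      linarith
    rw [hA3] at hR ⊢
    rcases Nat.lt_or_ge 2 e with he3 | he2
    · have he3' : (3 : ℝ) ≤ e := by exact_mod_cast he3
      have hX : 4 ≤ ((d : ℝ) + e) * e - 3 * d := by
        nlinarith [mul_nonneg (zero_le_one.trans hd') (sub_nonneg.mpr he3')]
      have := mul_le_mul_of_nonneg_left hX (zero_le_one.trans hD')
      have : 0 ≤ (g : ℝ) * (d + e) ^ 2 := by positivity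
      linarith
    obtain rfl : e = 2 := by omega
    push_cast at *
    have hg1 : 1 ≤ g := by
      by_contra! hlt
      obtain rfl : g = 0 := by omega
      have hR' : r + r' + 2 * D = 3 * d := by
        have : (r : ℝ) + r' + 2 * D = 3 * d := by push_cast at hR; linarith
        exact_mod_cast this
      have := hparity (by omega) (by omega)
      omega
    have hg1' : (1 : ℝ) ≤ g := by exact_mod_cast hg1
    have h6 : ((d : ℝ) + 2) ^ 2 ≤ g * (d + 2) ^ 2 := le_mul_of_one_le_left (by positivity) hg1'
    have h7 : 2 * (D : ℝ) * (d + 2) ≤ (d + 2) ^ 2 := by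
      rw [sq]
      exact mul_le_mul_of_nonneg_right (by linarith) (by positivity)
    have h8 : (0 : ℝ) ≤ D * d := by positivity
    linarith
  have h1 := content_div_le_linear hβ hb hr
  have h2 := content_div_le_linear hβ hb hr'
  push_cast at h1 h2
  have hpos : (0 : ℝ) < d * β * (β - 1) := by
    have : (0 : ℝ) < β - 1 := by linarith
    positivity
  refine le_of_mul_le_mul_left ?_ hpos
  have h3 : (β - 1) * (4 * (D : ℝ)) ≤
      (β - 1) * (D * ((d + e) * e - (β - a - a') * d) + g * (d + e) ^ 2) :=
    mul_le_mul_of_nonneg_left hslack (by linarith)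
  have h4 : (2 : ℝ) * D * (d - 1) ≤ (β - 1) * (4 * (D : ℝ)) := by
    have h : (d : ℝ) - 1 ≤ 2 * (β - 1) := by linarith
    have := mul_le_mul_of_nonneg_left h (show (0 : ℝ) ≤ 2 * D by positivity)
    linarith
  have h5 : (β - 1) * (d + e) * ((r : ℝ) + r') + (β - 1) *
      (D * ((d + e) * e - (β - a - a') * d) + g * (d + e) ^ 2) =
      (β - a - a') * (d * β * (β - 1)) := by
    rw [hR]
    linear_combination (β - 1) * (β - a - a') * d * hb'
  linarith

theorem content_div_add_content_div_le_one {b β D d : ℕ} (hβ : 2 ≤ β)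
    (hb : b = β + D) (hD : 1 ≤ D) (hdb : d ≤ b) (hcase : d = b ∨ d = b - 1 ∨ 2 * D ≤ b) {u v : ℕ}
    (huv : u + v + D ≤ d) : content b β (u / d) + content b β (v / d) ≤ 1 := by
  have hb2 : 2 ≤ b := by omega
  have hβ' : (2 : ℝ) ≤ β := by exact_mod_cast hβ
  have hu := mul_content_div (b := b) hb2 hβ (show u < d by omega)
  have hv := mul_content_div (b := b) hb2 hβ (show v < d by omega)
  obtain rfl | rfl | hlt : d = b ∨ b = d + 1 ∨ d + 2 ≤ b := by omega
  · have hsum : (u : ℝ) + v ≤ β := by exact_mod_cast (show u + v ≤ β by omega)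
    rw [Nat.mul_div_cancel _ (by omega), Nat.mul_mod_left, Nat.cast_zero, zero_div,
      content_zero] at hu hv
    nlinarith
  · have hsum : (u : ℝ) + v + 1 ≤ β := by exact_mod_cast (show u + v + 1 ≤ β by omega)
    have hdiv : ∀ w < d, w * (d + 1) / d = w ∧ w * (d + 1) % d = w := fun w hw ↦ by
      rw [mul_add, mul_one, mul_comm w d, Nat.mul_add_div (by omega), Nat.mul_add_mod,
        Nat.div_eq_of_lt hw, Nat.mod_eq_of_lt hw]
      simp
    rw [(hdiv u (by omega)).1, (hdiv u (by omega)).2] at hu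
    rw [(hdiv v (by omega)).1, (hdiv v (by omega)).2] at hv
    nlinarith
  · exact content_div_add_content_div_le_one_of_add_two_le hβ hb hD (by omega) hlt huv

theorem content_sub_content_sub_le {b β : ℕ} (hβ : 2 ≤ β) (hb : β ≤ b) {x z : ℝ} (hx : 0 ≤ x)
    (hxz : x ≤ z) : content b β z - content b β (z - x) ≤ content b β x := by
  have := content_add_le hβ hb hx (sub_nonneg.mpr hxz)
  rw [add_sub_cancel] at this
  linarith

theorem one_sub_content_one_sub_le {b β : ℕ} (hβ : 2 ≤ β) (hb : β ≤ b) {x y : ℝ} (hx : x ≤ 1)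
    (hy : 1 ≤ y) (hyb : y < b) :
    1 - content b β (1 - x) ≤ content b β y - content b β (y - x) := by
  have := content_add_le hβ hb (sub_nonneg.mpr hy) (sub_nonneg.mpr hx)
  rw [content_sub_one (by omega) hβ hy hyb, show y - 1 + (1 - x) = y - x by ring] at this
  linarith

/-- Step property of the nilgrowth witness `n ↦ c_{b,β}(n/d)`. -/
theorem stmt9 (b d D : ℕ) (hD1 : 1 ≤ D) (hDd : D ≤ d) (hdb : d ≤ b)
    (hβ : 2 ≤ b - D)
    (hcase : d = b ∨ d = b - 1 ∨ 2 * D ≤ b) :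
    ∀ i j : ℕ, ((i = d ∧ j = d) ∨ (j + D ≤ i ∧ i ≤ d)) →
    ∀ n m k : ℕ, d * b ^ k ≤ n → n < d * b ^ (k + 1) → j * b ^ k ≤ m →
      content b (b - D) ((m : ℝ) / (d : ℝ)) -
          content b (b - D) (((m - j * b ^ k : ℕ) : ℝ) / (d : ℝ)) ≤
        content b (b - D) ((n : ℝ) / (d : ℝ)) -
          content b (b - D) (((n - i * b ^ k : ℕ) : ℝ) / (d : ℝ)) := by
  intro i j hij n m k hn hn' hm
  obtain ⟨β, hb⟩ : ∃ β, b = β + D := ⟨b - D, by omega⟩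
  have hsub : b - D = β := by omega
  rw [hsub] at hβ ⊢
  have hb2 : 2 ≤ b := by omega
  have hd : (0 : ℝ) < d := by exact_mod_cast (show 0 < d by omega)
  have hB : (0 : ℝ) < (b : ℝ) ^ k := by positivity
  have hid : i ≤ d := by omega
  have hin : i * b ^ k ≤ n := (Nat.mul_le_mul_right _ hid).trans hn
  have hscale : ∀ p : ℕ, (p : ℝ) / d = b ^ k * (p / (d * b ^ k)) := fun p ↦ by field_simp
  have hscale' : ∀ p q : ℕ, q * b ^ k ≤ p →
      ((p - q * b ^ k : ℕ) : ℝ) / d = b ^ k * (p / (d * b ^ k) - q / d) := fun p q hq ↦ by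
    push_cast [Nat.cast_sub hq]
    field_simp
  rw [hscale' m j hm, hscale' n i hin, hscale m, hscale n]
  simp only [content_pow_mul (show 0 < b by omega) (show 0 < β by omega), ← mul_sub]
  refine mul_le_mul_of_nonneg_left ?_ (by positivity)
  have hy : 1 ≤ (n : ℝ) / (d * b ^ k) := by
    rw [one_le_div (by positivity)]
    exact_mod_cast hn
  have hyb : (n : ℝ) / (d * b ^ k) < b := by
    rw [div_lt_iff₀ (by positivity)]
    calc (n : ℝ) < d * b ^ (k + 1) := by exact_mod_cast hn'
      _ = b * (d * b ^ k) := by ring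
  have hz : (j : ℝ) / d ≤ m / (d * b ^ k) := by
    rw [div_le_div_iff₀ hd (by positivity)]
    have : (j : ℝ) * b ^ k ≤ m := by exact_mod_cast hm
    nlinarith
  have hx : (i : ℝ) / d ≤ 1 := by
    rw [div_le_one hd]
    exact_mod_cast hid
  refine (content_sub_content_sub_le hβ (by omega) (by positivity) hz).trans
    (le_trans ?_ (one_sub_content_one_sub_le hβ (by omega) hx hy hyb))
  rcases hij with ⟨rfl, rfl⟩ | ⟨hji, -⟩
  · rw [div_self hd.ne', sub_self, content_zero, content_one hb2 hβ, sub_zero]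
  · have h := content_div_add_content_div_le_one hβ hb hD1 hdb hcase (u := j) (v := d - i)
      (by omega)
    rw [Nat.cast_sub hid, sub_div, div_self hd.ne'] at h
    linarith
end
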